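/- arXiv:2012.02058 — 2 statements merged into one kernel-verified Lean document; each statement's English description precedes it below -/
import Mathlib

section
/- For every c = (c_1, …, c_d) ∈ A^d, the restriction of the evaluation map pr_c to K = ⋂_{ℓ=1}^d ker D_ℓ is an A-linear bijection onto M. (This is Lemma 3.4(ii) of the paper for an arbitrary choice of lifting τ: each projection pr_τ restricted to (E ⊗ OC)^{θ=0} is an isomorphism onto E ⊗ R̂‾_K.) -/
/-!
The kernel condition is the recursion `(I ℓ + 1) • f (I + e_ℓ) = θ_ℓ (f I)`. Since the integers
`I ℓ + 1` are invertible in a `ℚ`-algebra, its solutions are exactly the functions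
`tildeFun θ m : I ↦ θ^I m / I!` with `m = f 0` (`eq_tildeFun`, `tildeFun_mem`), and these have
finite support by local nilpotence. So `f ↦ f 0` identifies `K` with `M`, and it remains to see that
`m ↦ pr_c (tildeFun θ m)`, which is `exp (∑ c_ℓ θ_ℓ)`, is bijective on `M`.

Instead of multiplying exponential series, filter `M` by the submodules
`F_N = {m | θ^I m = 0 for all |I| ≥ N}`, which exhaust `M`. The operator commutes with every `θ^I`
and is the identity on `F_1`, so it acts as the identity on the graded pieces of the
filtration (`thetaPow_prC_tildeFun`). Injectivity and surjectivity follow by induction on `N`.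
-/

open scoped BigOperators

namespace HiggsLocal

variable {A M : Type*} [CommRing A] [Algebra ℚ A] [AddCommGroup M] [Module A M] {d : ℕ}

/-- `θ^I = θ 0 ^ I 0 ∘ ⋯ ∘ θ (d-1) ^ I (d-1)` as an `A`-linear endomorphism of `M`. -/
def thetaPow (θ : Fin d → Module.End A M) (I : Fin d → ℕ) : Module.End A M :=
  (List.ofFn fun ℓ => θ ℓ ^ I ℓ).prod

/-- `I! = I(1)! ⋯ I(d)!` as a rational number. -/
def mfact (I : Fin d → ℕ) : ℚ := ∏ ℓ, ((I ℓ).factorial : ℚ)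

/-- The operator `D_ℓ` on `W = ((Fin d → ℕ) → M)`, given by
`(D_ℓ f)(I) = θ_ℓ(f I) - (I ℓ + 1) • f (I + e_ℓ)`. -/
def Dop (θ : Fin d → Module.End A M) (ℓ : Fin d) :
    ((Fin d → ℕ) → M) →ₗ[A] ((Fin d → ℕ) → M) where
  toFun f := fun I => θ ℓ (f I) - ((I ℓ + 1 : ℕ) : A) • f (I + Pi.single ℓ 1)
  map_add' f g := by
    funext I
    simp only [Pi.add_apply, map_add, smul_add]
    abel
  map_smul' a f := by
    funext I
    simp only [Pi.smul_apply, map_smul, RingHom.id_apply, smul_comm ((I ℓ + 1 : ℕ) : A) a,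
      smul_sub]

/-- `K = ⋂_ℓ ker D_ℓ`. -/
def Kset (θ : Fin d → Module.End A M) : Set ((Fin d → ℕ) → M) :=
  {f | ∀ ℓ : Fin d, Dop θ ℓ f = 0}

/-- `m̃ (I) = (1/I!) • θ^I m`. -/
noncomputable def tildeFun (θ : Fin d → Module.End A M) (m : M) : (Fin d → ℕ) → M :=
  fun I => algebraMap ℚ A (mfact I)⁻¹ • thetaPow θ I m

/-- `pr_c f = Σ_I c^I • f I`. -/
noncomputable def prC (c : Fin d → A)
    (f : (Fin d → ℕ) → M) : M :=
  ∑ᶠ I : Fin d → ℕ, (∏ ℓ, c ℓ ^ I ℓ) • f I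

/-- `β_c m = Σ_I (c^I / I!) • θ^I m`. -/
noncomputable def betaC (θ : Fin d → Module.End A M) (c : Fin d → A) (m : M) : M :=
  ∑ᶠ I : Fin d → ℕ, ((∏ ℓ, c ℓ ^ I ℓ) * algebraMap ℚ A (mfact I)⁻¹) • thetaPow θ I m

end HiggsLocal

namespace HiggsLocal

section

variable {A M : Type*} [CommRing A] [AddCommGroup M] [Module A M]

lemma thetaPow_succ {d : ℕ} (θ : Fin (d + 1) → Module.End A M) (I : Fin (d + 1) → ℕ) :
    thetaPow θ I = θ 0 ^ I 0 * thetaPow (fun i => θ i.succ) (fun i => I i.succ) := by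
  simp [thetaPow, List.ofFn_succ]

lemma thetaPow_zero {d : ℕ} (θ : Fin d → Module.End A M) : thetaPow θ 0 = 1 := by
  induction d with
  | zero => simp [thetaPow]
  | succ d ih =>
    rw [thetaPow_succ]
    change θ 0 ^ 0 * thetaPow (fun i => θ i.succ) 0 = 1
    rw [ih, pow_zero, one_mul]

lemma thetaPow_single {d : ℕ} (θ : Fin d → Module.End A M) (ℓ : Fin d) :
    thetaPow θ (Pi.single ℓ 1) = θ ℓ := by
  induction d with
  | zero => exact ℓ.elim0
  | succ d ih =>
    rw [thetaPow_succ]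
    refine Fin.cases ?_ (fun k => ?_) ℓ
    · have h : (fun i : Fin d => (Pi.single (0 : Fin (d + 1)) 1 : Fin (d + 1) → ℕ) i.succ) = 0 := by
        funext i
        simp
      rw [h, thetaPow_zero]
      simp
    · have h : (fun i : Fin d => (Pi.single k.succ 1 : Fin (d + 1) → ℕ) i.succ)
          = Pi.single k 1 := by
        funext i
        simp [Pi.single_apply]
      rw [h, ih]
      simp [(Fin.succ_ne_zero k).symm]

lemma thetaPow_add {d : ℕ} (θ : Fin d → Module.End A M)
    (hcomm : ∀ i j : Fin d, Commute (θ i) (θ j)) (I J : Fin d → ℕ) :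
    thetaPow θ (I + J) = thetaPow θ I * thetaPow θ J := by
  induction d with
  | zero => simp [thetaPow]
  | succ d ih =>
    have h := ih (fun i => θ i.succ) (fun i j => hcomm _ _)
      (fun i => I i.succ) (fun i => J i.succ)
    have hc : Commute (θ 0 ^ J 0) (thetaPow (fun i => θ i.succ) (fun i => I i.succ)) := by
      refine Commute.list_prod_right _ _ fun x hx => ?_
      obtain ⟨i, rfl⟩ := (List.mem_ofFn' _ _).1 hx
      exact (hcomm _ _).pow_pow _ _
    have h' : thetaPow (fun i : Fin d => θ i.succ) (fun i => (I + J) i.succ) = _ := h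
    rw [thetaPow_succ, thetaPow_succ θ I, thetaPow_succ θ J, h', Pi.add_apply, pow_add,
      mul_assoc, mul_assoc, ← mul_assoc (θ 0 ^ J 0), hc.eq]
    simp only [mul_assoc]

lemma thetaPow_comm_apply {d : ℕ} {θ : Fin d → Module.End A M}
    (hcomm : ∀ i j : Fin d, Commute (θ i) (θ j)) (I J : Fin d → ℕ) (m : M) :
    thetaPow θ I (thetaPow θ J m) = thetaPow θ J (thetaPow θ I m) := by
  rw [← Module.End.mul_apply, ← Module.End.mul_apply, ← thetaPow_add θ hcomm,
    ← thetaPow_add θ hcomm, add_comm]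

lemma eq_zero_of_killed {d : ℕ} {θ : Fin d → Module.End A M} {m : M}
    (hm : ∀ I : Fin d → ℕ, 0 ≤ ∑ ℓ, I ℓ → thetaPow θ I m = 0) : m = 0 := by
  simpa [thetaPow_zero] using hm 0 (Nat.zero_le _)

lemma finite_support_smul {d : ℕ} (c : Fin d → A) {f : (Fin d → ℕ) → M}
    (hf : (Function.support f).Finite) :
    (Function.support fun I => (∏ ℓ, c ℓ ^ I ℓ) • f I).Finite :=
  hf.subset fun I hI h => hI (by simp [h])

lemma prC_sub {d : ℕ} (c : Fin d → A) {f g : (Fin d → ℕ) → M}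
    (hf : (Function.support f).Finite) (hg : (Function.support g).Finite) :
    prC c (f - g) = prC c f - prC c g := by
  simp only [prC, Pi.sub_apply, smul_sub]
  exact finsum_sub_distrib (finite_support_smul c hf) (finite_support_smul c hg)

end

lemma mfact_add_single {d : ℕ} (I : Fin d → ℕ) (ℓ : Fin d) :
    mfact (I + Pi.single ℓ 1) = ((I ℓ + 1 : ℕ) : ℚ) * mfact I := by
  have h : ∀ k, (((I + Pi.single ℓ 1 : Fin d → ℕ) k).factorial : ℚ)
      = (if k = ℓ then ((I ℓ + 1 : ℕ) : ℚ) else 1) * ((I k).factorial : ℚ) := by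
    intro k
    by_cases hk : k = ℓ
    · subst hk
      simp [Nat.factorial_succ]
    · simp [hk]
  simp only [mfact, h, Finset.prod_mul_distrib, Finset.prod_ite_eq', Finset.mem_univ, if_true]

section

variable {A M : Type*} [CommRing A] [Algebra ℚ A] [AddCommGroup M] [Module A M] {d : ℕ}
  {θ : Fin d → Module.End A M}

lemma tildeFun_zero (m : M) : tildeFun θ m 0 = m := by
  simp [tildeFun, thetaPow_zero, mfact]

lemma tildeFun_add_single (hcomm : ∀ i j : Fin d, Commute (θ i) (θ j)) (m : M)
    (I : Fin d → ℕ) (ℓ : Fin d) :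
    ((I ℓ + 1 : ℕ) : A) • tildeFun θ m (I + Pi.single ℓ 1) = θ ℓ (tildeFun θ m I) := by
  have h1 : ((I ℓ + 1 : ℕ) : ℚ) ≠ 0 := by positivity
  have h2 : ((I ℓ + 1 : ℕ) : A) = algebraMap ℚ A ((I ℓ + 1 : ℕ) : ℚ) := by simp
  rw [tildeFun, tildeFun, map_smul, smul_smul, h2, ← map_mul, mfact_add_single, mul_inv,
    mul_inv_cancel_left₀ h1, add_comm I, thetaPow_add θ hcomm, thetaPow_single]
  rfl

lemma tildeFun_mem (hcomm : ∀ i j : Fin d, Commute (θ i) (θ j)) (m : M) :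
    tildeFun θ m ∈ Kset θ := by
  intro ℓ
  funext I
  exact sub_eq_zero.2 (tildeFun_add_single hcomm m I ℓ).symm

lemma eq_tildeFun (hcomm : ∀ i j : Fin d, Commute (θ i) (θ j)) {f : (Fin d → ℕ) → M}
    (hf : f ∈ Kset θ) : f = tildeFun θ (f 0) := by
  suffices h : ∀ (n : ℕ) (I : Fin d → ℕ), ∑ ℓ, I ℓ = n → f I = tildeFun θ (f 0) I from
    funext fun I => h _ I rfl
  intro n
  induction n with
  | zero =>
    intro I hI
    have : I = 0 := by
      funext k
      exact (Finset.sum_eq_zero_iff.1 hI) k (Finset.mem_univ k)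
    rw [this, tildeFun_zero]
  | succ n ih =>
    intro I hI
    obtain ⟨ℓ, -, hℓ⟩ : ∃ ℓ ∈ Finset.univ, I ℓ ≠ 0 :=
      Finset.exists_ne_zero_of_sum_ne_zero (by omega)
    obtain ⟨J, rfl⟩ : ∃ J : Fin d → ℕ, I = J + Pi.single ℓ 1 := by
      refine ⟨I - Pi.single ℓ 1, ?_⟩
      funext k
      by_cases hk : k = ℓ
      · subst hk
        simp
        omega
      · simp [hk]
    have hJ : ∑ k, J k = n := by
      simpa [Finset.sum_add_distrib] using hI
    have h1 : θ ℓ (f J) - ((J ℓ + 1 : ℕ) : A) • f (J + Pi.single ℓ 1) = 0 :=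
      congrFun (hf ℓ) J
    have hu : IsUnit ((J ℓ + 1 : ℕ) : A) := by
      have h3 : IsUnit ((J ℓ + 1 : ℕ) : ℚ) := IsUnit.mk0 _ (by positivity)
      simpa using h3.map (algebraMap ℚ A)
    apply hu.smul_left_cancel.1
    rw [tildeFun_add_single hcomm, ← ih J hJ, ← sub_eq_zero.1 h1]

lemma tildeFun_sub (m n : M) : tildeFun θ (m - n) = tildeFun θ m - tildeFun θ n := by
  funext I
  simp [tildeFun, smul_sub]

lemma finite_support_tildeFun
    (hnil : ∀ m : M, ∃ N : ℕ, ∀ I : Fin d → ℕ, N ≤ ∑ ℓ, I ℓ → thetaPow θ I m = 0) (m : M) :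
    (Function.support (tildeFun θ m)).Finite := by
  obtain ⟨N, hN⟩ := hnil m
  refine (Set.finite_Iic (fun _ : Fin d => N)).subset fun I hI => ?_
  by_contra hcon
  apply hI
  obtain ⟨k, hk⟩ : ∃ k, N < I k := by
    simpa [Pi.le_def] using hcon
  have : I k ≤ ∑ ℓ, I ℓ := Finset.single_le_sum (fun _ _ => Nat.zero_le _) (Finset.mem_univ k)
  rw [tildeFun, hN I (by omega), smul_zero]

/-- `exp (∑ c_ℓ θ_ℓ)` commutes with `θ^I`. -/
lemma thetaPow_prC (hcomm : ∀ i j : Fin d, Commute (θ i) (θ j))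
    (hnil : ∀ m : M, ∃ N : ℕ, ∀ I : Fin d → ℕ, N ≤ ∑ ℓ, I ℓ → thetaPow θ I m = 0)
    (c : Fin d → A) (I : Fin d → ℕ) (m : M) :
    thetaPow θ I (prC c (tildeFun θ m)) = prC c (tildeFun θ (thetaPow θ I m)) := by
  have h := (thetaPow θ I).toAddMonoidHom.map_finsum
    (finite_support_smul c (finite_support_tildeFun hnil m))
  simp only [LinearMap.toAddMonoidHom_coe] at h
  rw [prC, h, prC]
  refine finsum_congr fun J => ?_
  rw [map_smul, tildeFun, tildeFun, map_smul, thetaPow_comm_apply hcomm]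

/-- `exp (∑ c_ℓ θ_ℓ)` fixes every vector killed by all `θ^I` with `|I| ≥ 1`. -/
lemma prC_tildeFun_of_killed (c : Fin d → A) {m : M}
    (hm : ∀ I : Fin d → ℕ, 1 ≤ ∑ ℓ, I ℓ → thetaPow θ I m = 0) :
    prC c (tildeFun θ m) = m := by
  rw [prC, finsum_eq_single _ 0]
  · simp [tildeFun_zero]
  · intro I hI
    obtain ⟨k, hk⟩ := Function.ne_iff.1 hI
    have h1 : I k ≤ ∑ ℓ, I ℓ := Finset.single_le_sum (fun _ _ => Nat.zero_le _) (Finset.mem_univ k)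
    have h2 : I k ≠ 0 := hk
    rw [tildeFun, hm I (by omega), smul_zero, smul_zero]

/-- `exp (∑ c_ℓ θ_ℓ)` is the identity on the quotient `F_{N+1} / F_N`. -/
lemma thetaPow_prC_tildeFun (hcomm : ∀ i j : Fin d, Commute (θ i) (θ j))
    (hnil : ∀ m : M, ∃ N : ℕ, ∀ I : Fin d → ℕ, N ≤ ∑ ℓ, I ℓ → thetaPow θ I m = 0)
    (c : Fin d → A) {N : ℕ} {m : M}
    (hm : ∀ I : Fin d → ℕ, N + 1 ≤ ∑ ℓ, I ℓ → thetaPow θ I m = 0)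
    (I : Fin d → ℕ) (hI : N ≤ ∑ ℓ, I ℓ) :
    thetaPow θ I (prC c (tildeFun θ m)) = thetaPow θ I m := by
  rw [thetaPow_prC hcomm hnil, prC_tildeFun_of_killed]
  intro J hJ
  rw [← Module.End.mul_apply, ← thetaPow_add θ hcomm]
  apply hm
  simp only [Pi.add_apply, Finset.sum_add_distrib]
  omega

lemma prC_tildeFun_injective (hcomm : ∀ i j : Fin d, Commute (θ i) (θ j))
    (hnil : ∀ m : M, ∃ N : ℕ, ∀ I : Fin d → ℕ, N ≤ ∑ ℓ, I ℓ → thetaPow θ I m = 0)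
    (c : Fin d → A) : Function.Injective fun m => prC c (tildeFun θ m) := by
  have key : ∀ (N : ℕ) (m : M), (∀ I : Fin d → ℕ, N ≤ ∑ ℓ, I ℓ → thetaPow θ I m = 0) →
      prC c (tildeFun θ m) = 0 → m = 0 := by
    intro N
    induction N with
    | zero => exact fun m hm _ => eq_zero_of_killed hm
    | succ N ih =>
      refine fun m hm h0 => ih m (fun I hI => ?_) h0
      rw [← thetaPow_prC_tildeFun hcomm hnil c hm I hI, h0, map_zero]
  intro m n h
  obtain ⟨N, hN⟩ := hnil (m - n)
  refine sub_eq_zero.1 (key N _ hN ?_)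
  rw [tildeFun_sub, prC_sub c (finite_support_tildeFun hnil m) (finite_support_tildeFun hnil n)]
  exact sub_eq_zero.2 h

lemma prC_tildeFun_surjective (hcomm : ∀ i j : Fin d, Commute (θ i) (θ j))
    (hnil : ∀ m : M, ∃ N : ℕ, ∀ I : Fin d → ℕ, N ≤ ∑ ℓ, I ℓ → thetaPow θ I m = 0)
    (c : Fin d → A) : Function.Surjective fun m => prC c (tildeFun θ m) := by
  have key : ∀ (N : ℕ) (m : M), (∀ I : Fin d → ℕ, N ≤ ∑ ℓ, I ℓ → thetaPow θ I m = 0) →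
      ∃ n, prC c (tildeFun θ n) = m := by
    intro N
    induction N with
    | zero =>
      intro m hm
      rw [eq_zero_of_killed hm]
      exact ⟨0, prC_tildeFun_of_killed c (by simp)⟩
    | succ N ih =>
      intro m hm
      -- The error `exp(…) m - m` lies one step lower in the filtration.
      obtain ⟨n, hn⟩ := ih (prC c (tildeFun θ m) - m) fun I hI => by
        rw [map_sub, thetaPow_prC_tildeFun hcomm hnil c hm I hI, sub_self]
      refine ⟨m - n, ?_⟩
      rw [tildeFun_sub,
        prC_sub c (finite_support_tildeFun hnil m) (finite_support_tildeFun hnil n), hn]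
      abel
  intro m
  obtain ⟨N, hN⟩ := hnil m
  exact key N m hN

end

end HiggsLocal

open HiggsLocal in
/-- For every c ∈ A^d, the restriction of the evaluation map
pr_c to K = ⋂_ℓ ker D_ℓ is an A-linear bijection onto M. -/
theorem prC_bijective
    {A M : Type*} [CommRing A] [Algebra ℚ A] [AddCommGroup M] [Module A M]
    {d : ℕ} (hd : 0 < d) (θ : Fin d → Module.End A M)
    (hcomm : ∀ i j : Fin d, Commute (θ i) (θ j))
    (hnil : ∀ m : M, ∃ N : ℕ, ∀ I : Fin d → ℕ, N ≤ ∑ ℓ, I ℓ → thetaPow θ I m = 0) :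
    ∀ c : Fin d → A,
      Function.Bijective
        (fun f : {f : (Fin d → ℕ) → M // (Function.support f).Finite ∧ f ∈ Kset θ} =>
          prC c (f : (Fin d → ℕ) → M)) := by
  intro c
  constructor
  · rintro ⟨f, hf, hfK⟩ ⟨g, hg, hgK⟩ h
    have h' : prC c f = prC c g := h
    rw [eq_tildeFun hcomm hfK, eq_tildeFun hcomm hgK] at h'
    have h0 : f 0 = g 0 := prC_tildeFun_injective hcomm hnil c h'
    apply Subtype.ext
    change f = g
    rw [eq_tildeFun hcomm hfK, eq_tildeFun hcomm hgK, h0]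
  · intro m
    obtain ⟨n, hn⟩ := prC_tildeFun_surjective hcomm hnil c m
    exact ⟨⟨tildeFun θ n, finite_support_tildeFun hnil n, tildeFun_mem hcomm n⟩, hn⟩
end

section
/- For every c = (c_1, …, c_d) ∈ A^d and every f ∈ K = ⋂_{ℓ=1}^d ker D_ℓ, one has pr_c(f) = β_c(f(0)); that is, the restriction of pr_c to K equals β_c composed with the restriction of pr_0 to K. (This is Lemma 3.4(iii) of the paper in coordinate form: for two liftings τ, τ′, the projections on (E ⊗ OC)^{θ=0} satisfy pr_{τ′} = β_{τ,τ′} ∘ pr_τ, where β_{τ,τ′} is given by the Taylor series Σ_I θ(ξ∂)^I(e)/I! · ((τ(T) − τ′(T))/ξ)^I.) -/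
/-!
An element `f` of `K` satisfies the recursion `(I(ℓ) + 1) • f(I + e_ℓ) = θ_ℓ (f I)`. Since the
positive integers are invertible in the `ℚ`-algebra `A`, the recursion determines `f` from `f 0`:
`f I = (1/I!) • θ^I (f 0)`, by induction on `I` one unit vector at a time
(`eq_tildeFun_of_mem_Kset`). The commutativity of the `θ_ℓ` enters through
`θ^(I + e_ℓ) = θ_ℓ ∘ θ^I`. The sums defining `pr_c f` and `β_c (f 0)` then agree term by term.
-/

open scoped BigOperators

namespace HiggsLocal

lemma thetaPow_add_single {A M : Type*} [CommRing A] [AddCommGroup M] [Module A M] {d : ℕ}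
    (θ : Fin d → Module.End A M) (hcomm : ∀ i j : Fin d, Commute (θ i) (θ j))
    (I : Fin d → ℕ) (ℓ : Fin d) :
    thetaPow θ (I + Pi.single ℓ 1) = θ ℓ * thetaPow θ I := by
  induction d with
  | zero => exact ℓ.elim0
  | succ n ih =>
    unfold thetaPow at ih ⊢
    rw [List.ofFn_succ, List.ofFn_succ, List.prod_cons, List.prod_cons]
    refine Fin.cases ?_ (fun k => ?_) ℓ
    · simp [pow_succ', mul_assoc]
    · have h := ih (fun i => θ i.succ) (fun i j => hcomm _ _) (fun i => I i.succ) k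
      have e : ∀ i : Fin n, (I + Pi.single k.succ 1 : Fin (n + 1) → ℕ) i.succ
          = ((fun i => I i.succ) + Pi.single k 1 : Fin n → ℕ) i := by
        intro i
        simp [Pi.single_apply]
      simp only [e, h]
      have h0 : (I + Pi.single k.succ 1 : Fin (n + 1) → ℕ) 0 = I 0 := by
        simp [Pi.single_apply, (Fin.succ_ne_zero k).symm]
      rw [h0, ← mul_assoc, ← mul_assoc, ((hcomm 0 k.succ).pow_left (I 0)).eq]

/-- Elements of `K` are the Taylor expansions of their constant terms. -/
lemma eq_tildeFun_of_mem_Kset {A M : Type*} [CommRing A] [Algebra ℚ A] [AddCommGroup M]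
    [Module A M] {d : ℕ} (θ : Fin d → Module.End A M)
    (hcomm : ∀ i j : Fin d, Commute (θ i) (θ j)) {f : (Fin d → ℕ) → M} (hf : f ∈ Kset θ) :
    f = tildeFun θ (f 0) := by
  have key : ∀ n : ℕ, ∀ I : Fin d → ℕ, ∑ ℓ, I ℓ = n → f I = tildeFun θ (f 0) I := by
    intro n
    induction n with
    | zero =>
      intro I hI
      have h0 : I = 0 := by
        funext i
        simpa using Finset.sum_eq_zero_iff.mp hI i (Finset.mem_univ i)
      subst h0
      have h1 : thetaPow θ 0 = 1 := by simp [thetaPow, List.ofFn_const]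
      simp [tildeFun, mfact, h1]
    | succ n ih =>
      intro I hI
      obtain ⟨ℓ, hℓ⟩ : ∃ ℓ, I ℓ ≠ 0 := by
        by_contra! h
        simp [h] at hI
      obtain ⟨J, rfl⟩ : ∃ J : Fin d → ℕ, I = J + Pi.single ℓ 1 := by
        refine ⟨I - Pi.single ℓ 1, ?_⟩
        funext i
        by_cases hi : i = ℓ
        · subst hi
          simp
          lia
        · simp [hi]
      have hJ : ∑ i, J i = n := by
        simpa [Finset.sum_add_distrib] using hI
      have hrec : θ ℓ (f J) = ((J ℓ + 1 : ℕ) : A) • f (J + Pi.single ℓ 1) :=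
        sub_eq_zero.mp (congrFun (hf ℓ) J)
      have hne : ((J ℓ + 1 : ℕ) : ℚ) ≠ 0 := by positivity
      have hinv : algebraMap ℚ A ((J ℓ + 1 : ℕ) : ℚ)⁻¹ * ((J ℓ + 1 : ℕ) : A) = 1 := by
        rw [← map_natCast (algebraMap ℚ A), ← map_mul, inv_mul_cancel₀ hne, map_one]
      calc f (J + Pi.single ℓ 1)
          = algebraMap ℚ A ((J ℓ + 1 : ℕ) : ℚ)⁻¹ • θ ℓ (f J) := by
            rw [hrec, smul_smul, hinv, one_smul]
        _ = tildeFun θ (f 0) (J + Pi.single ℓ 1) := by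
            rw [ih J hJ, tildeFun, tildeFun, map_smul, smul_smul, ← map_mul, ← mul_inv,
              ← mfact_add_single, thetaPow_add_single θ hcomm, Module.End.mul_apply]
  exact funext fun I => key _ I rfl

end HiggsLocal

open HiggsLocal in
/-- For every c ∈ A^d and every f ∈ K = ⋂_ℓ ker D_ℓ one has
pr_c(f) = β_c(f(0)); i.e. the restriction of pr_c to K equals β_c composed with
the restriction of pr_0 to K. -/
theorem prC_eq_betaC_eval_zero
    {A M : Type*} [CommRing A] [Algebra ℚ A] [AddCommGroup M] [Module A M]
    {d : ℕ} (hd : 0 < d) (θ : Fin d → Module.End A M)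
    (hcomm : ∀ i j : Fin d, Commute (θ i) (θ j))
    (hnil : ∀ m : M, ∃ N : ℕ, ∀ I : Fin d → ℕ, N ≤ ∑ ℓ, I ℓ → thetaPow θ I m = 0) :
    ∀ c : Fin d → A, ∀ f : (Fin d → ℕ) → M,
      (Function.support f).Finite → f ∈ Kset θ →
      prC c f = betaC θ c (f 0) := by
  intro c f _ hf
  unfold prC betaC
  refine finsum_congr fun I => ?_
  rw [mul_smul]
  exact congrArg _ (congrFun (eq_tildeFun_of_mem_Kset θ hcomm hf) I)
end
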